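/- arXiv:2405.06518 — 2 statements merged into one kernel-verified Lean document; each statement's English description precedes it below -/
import Mathlib

section
/- There exists a constant C > 0 such that for every r₀ ≥ 2 and all points x, y ∈ ℝ² with x ≠ y, |x₂| ≤ r₀/2 and |y₂| ≤ r₀/2, the components of the difference D(x,y) = G(x,y) − K(x−y) satisfy |D₁(x,y)| ≤ (C/r₀)(1 + log r₀ + χ_{(0,1)}(|x−y|) log(1/|x−y|)) and |D₂(x,y)| ≤ C/r₀, where χ_{(0,1)}(s) equals 1 if 0 < s < 1 and 0 otherwise. -/
/-! With `a = r₀ + x₂`, `b = r₀ + y₂`, `d = |x - y|` and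
`P θ = d² + 2ab(1 - cos θ) = d² + 4ab sin²(θ/2)`, set `I = ∫ b / P^{3/2}` and
`J = ∫ (1 - cos θ) / P^{3/2}` over `[0, π]`. Since `b - a cos θ = -(a - b) + a(1 - cos θ)`,
`2π D₁ = -(a - b)(I - 1/d²) + ab J` and `2π D₂ = (x₁ - y₁)((I - 1/d²) - b J)`.

* `d |I - 1/d²| ≤ C / r₀` (`abs_integral_sub_le`): the integrand weighted by `cos (θ/2)` has the
  elementary primitive `2 sin(θ/2) / (d² √P)`, with value `2 / (d² √(d² + 4ab))` at `π`, and the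
  defect `1 - cos(θ/2) ≤ sin²(θ/2)` is absorbed by `P ≥ 4ab sin²(θ/2)`.
  Moreover `d² + 4ab = (x₁ - y₁)² + (a + b)²`, so `√(d² + 4ab)` is `2b` up to `2d`.
* `b d J ≤ π / (2a)` (`mul_integral_one_sub_cos_le`), from `P^{3/2} ≥ d · 2ab(1 - cos θ)`.
* `ab J ≤ (π / r₀) log(1 + r₀/d)` (`integral_le_log`), from `√P ≥ (d + r₀ θ/π) / 2`; this is
  the only source of the logarithm, and it enters `D₁` only. -/

/-! ### The kernels -/

open MeasureTheory Real
open scoped RealInnerProductSpace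

/-- The plane `ℝ²` with the Euclidean norm. -/
abbrev E2 := EuclideanSpace ℝ (Fin 2)

open Classical in
/-- The two-dimensional Biot–Savart kernel
`K(x) = (1/(2π)) (−x₂, x₁)/|x|²`, with `K(0) = 0`. -/
noncomputable def K (x : E2) : E2 :=
  if x = 0 then 0
  else (2 * Real.pi * ‖x‖ ^ 2)⁻¹ • (WithLp.equiv 2 (Fin 2 → ℝ)).symm ![-(x 1), x 0]

/-- First component of the kernel `G`. -/
noncomputable def G1 (r₀ : ℝ) (x y : E2) : ℝ :=
  (2 * Real.pi)⁻¹ * ∫ θ in (0:ℝ)..Real.pi,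
    ((r₀ + y 1) * ((r₀ + y 1) - (r₀ + x 1) * Real.cos θ)) /
      (‖x - y‖ ^ 2 + 2 * (r₀ + x 1) * (r₀ + y 1) * (1 - Real.cos θ)) ^ ((3:ℝ)/2)

/-- Second component of the kernel `G`. -/
noncomputable def G2 (r₀ : ℝ) (x y : E2) : ℝ :=
  (2 * Real.pi)⁻¹ * ∫ θ in (0:ℝ)..Real.pi,
    ((r₀ + y 1) * (x 0 - y 0) * Real.cos θ) /
      (‖x - y‖ ^ 2 + 2 * (r₀ + x 1) * (r₀ + y 1) * (1 - Real.cos θ)) ^ ((3:ℝ)/2)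

/-- The kernel `G(x,y) = (G₁(x,y), G₂(x,y))` as a vector in `ℝ²`. -/
noncomputable def Gvec (r₀ : ℝ) (x y : E2) : E2 :=
  (WithLp.equiv 2 (Fin 2 → ℝ)).symm ![G1 r₀ x y, G2 r₀ x y]

/-! ### The denominator -/

/-- The expression under the power `3/2` in the denominators of `G1` and `G2`, where `a`, `b` are
the distances of the two points from the axis. -/
noncomputable def P (a b d θ : ℝ) : ℝ := d ^ 2 + 2 * a * b * (1 - cos θ)

lemma one_sub_cos_eq (θ : ℝ) : 1 - cos θ = 2 * sin (θ / 2) ^ 2 := by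
  rw [Real.sin_sq_eq_half_sub, mul_div_cancel₀ θ two_ne_zero]; ring

lemma P_eq (a b d θ : ℝ) : P a b d θ = d ^ 2 + 4 * (a * b) * sin (θ / 2) ^ 2 := by
  rw [P, one_sub_cos_eq]; ring

lemma P_ge {a b d : ℝ} (ha : 0 < a) (hb : 0 < b) (θ : ℝ) : d ^ 2 ≤ P a b d θ := by
  rw [P_eq]; have := mul_pos ha hb; nlinarith [mul_nonneg this.le (sq_nonneg (sin (θ / 2)))]

lemma P_pos {a b d : ℝ} (ha : 0 < a) (hb : 0 < b) (hd : 0 < d) (θ : ℝ) : 0 < P a b d θ :=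
  lt_of_lt_of_le (by positivity) (P_ge ha hb θ)

lemma le_sqrt_P {a b d : ℝ} (ha : 0 < a) (hb : 0 < b) (θ : ℝ) : d ≤ √(P a b d θ) :=
  Real.le_sqrt_of_sq_le (P_ge ha hb θ)

lemma rpow_three_halves {u : ℝ} (hu : 0 < u) : u ^ ((3:ℝ)/2) = u * √u := by
  rw [Real.sqrt_eq_rpow, ← Real.rpow_one_add' hu.le (by norm_num)]; norm_num

lemma continuous_div_P {a b d : ℝ} (ha : 0 < a) (hb : 0 < b) (hd : 0 < d) {f : ℝ → ℝ}
    (hf : Continuous f) : Continuous fun θ => f θ / P a b d θ ^ ((3:ℝ)/2) := by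
  have hP : Continuous (P a b d) := by unfold P; fun_prop
  refine hf.div (hP.rpow_const fun θ => Or.inr (by norm_num)) fun θ => ?_
  exact (Real.rpow_pos_of_pos (P_pos ha hb hd θ) _).ne'

/-! ### The leading part of the kernels -/

/-- The weight `cos (θ / 2)` makes the singular integrand exactly integrable. -/
lemma hasDerivAt_primitive {a b d : ℝ} (ha : 0 < a) (hb : 0 < b) (hd : 0 < d) (θ : ℝ) :
    HasDerivAt (fun θ => 2 * sin (θ / 2) / (d ^ 2 * √(P a b d θ)))
      (cos (θ / 2) / P a b d θ ^ ((3:ℝ)/2)) θ := by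
  have hp := P_pos ha hb hd θ
  have h1 : HasDerivAt (fun θ : ℝ => sin (θ / 2)) (cos (θ / 2) * (1 / 2)) θ :=
    ((hasDerivAt_id θ).div_const 2).sin
  have hP : HasDerivAt (P a b d) (4 * (a * b) * (2 * sin (θ / 2) * (cos (θ / 2) * (1 / 2)))) θ := by
    rw [funext (P_eq a b d)]
    simpa using ((h1.pow 2).const_mul (4 * (a * b))).const_add (d ^ 2)
  have hs := (hP.sqrt hp.ne').const_mul (d ^ 2)
  have hspos : 0 < √(P a b d θ) := Real.sqrt_pos.2 hp
  refine ((h1.const_mul 2).div hs (by positivity)).congr_deriv (Eq.symm ?_)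
  rw [rpow_three_halves hp]
  have hsq : √(P a b d θ) ^ 2 = P a b d θ := Real.sq_sqrt hp.le
  have e := P_eq a b d θ
  generalize √(P a b d θ) = S at *
  rw [← hsq] at e ⊢
  field_simp
  linear_combination -cos (θ / 2) * e

/-- The main estimate: the leading part of both kernels is the Biot–Savart factor `1 / d²`. -/
lemma abs_integral_sub_le {r a b z d : ℝ} (hr : 0 < r) (hra : r ≤ 2 * a) (hrb : r ≤ 2 * b)
    (hd : 0 < d) (hdz : d ^ 2 = z ^ 2 + (a - b) ^ 2) :
    d * |(∫ θ in (0:ℝ)..π, b / P a b d θ ^ ((3:ℝ)/2)) - 1 / d ^ 2| ≤ (2 + π / 2) / r := by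
  have ha : 0 < a := by linarith
  have hb : 0 < b := by linarith
  -- Write `1 = cos (θ / 2) + (1 - cos (θ / 2))` in the numerator; the first part is explicit.
  have hcos : ∫ θ in (0:ℝ)..π, cos (θ / 2) / P a b d θ ^ ((3:ℝ)/2)
      = 2 / (d ^ 2 * √(d ^ 2 + 4 * (a * b))) := by
    rw [intervalIntegral.integral_eq_sub_of_hasDerivAt
      (fun θ _ => hasDerivAt_primitive ha hb hd θ)
      ((continuous_div_P ha hb hd (by fun_prop)).intervalIntegrable _ _)]
    simp [P_eq]
  have hE0 : 0 ≤ ∫ θ in (0:ℝ)..π, (1 - cos (θ / 2)) / P a b d θ ^ ((3:ℝ)/2) := by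
    refine intervalIntegral.integral_nonneg pi_pos.le fun θ _ => ?_
    have := Real.cos_le_one (θ / 2)
    have := Real.rpow_pos_of_pos (P_pos ha hb hd θ) ((3:ℝ)/2)
    exact div_nonneg (by linarith) this.le
  have hE1 : ∫ θ in (0:ℝ)..π, (1 - cos (θ / 2)) / P a b d θ ^ ((3:ℝ)/2)
      ≤ ∫ θ in (0:ℝ)..π, 1 / (4 * (a * b) * d) := by
    refine intervalIntegral.integral_mono_on pi_pos.le
      ((continuous_div_P ha hb hd (by fun_prop)).intervalIntegrable _ _) (by simp) fun θ hθ => ?_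
    have hp := P_pos ha hb hd θ
    rw [rpow_three_halves hp, div_le_div_iff₀ (by positivity) (by positivity)]
    have hc : 0 ≤ cos (θ / 2) :=
      Real.cos_nonneg_of_neg_pi_div_two_le_of_le (by linarith [hθ.1, pi_pos]) (by linarith [hθ.2])
    have hc1 := Real.cos_le_one (θ / 2)
    have h1 : 1 - cos (θ / 2) ≤ sin (θ / 2) ^ 2 := by
      nlinarith [Real.sin_sq_add_cos_sq (θ / 2)]
    have h2 : (1 - cos (θ / 2)) * (4 * (a * b)) ≤ P a b d θ := by
      rw [P_eq]; nlinarith [mul_le_mul_of_nonneg_left h1 (mul_pos ha hb).le, sq_nonneg d]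
    have h3 := mul_le_mul h2 (le_sqrt_P ha hb θ) hd.le hp.le
    linarith
  have hsplit : ∫ θ in (0:ℝ)..π, b / P a b d θ ^ ((3:ℝ)/2)
      = b * (2 / (d ^ 2 * √(d ^ 2 + 4 * (a * b))))
        + b * ∫ θ in (0:ℝ)..π, (1 - cos (θ / 2)) / P a b d θ ^ ((3:ℝ)/2) := by
    rw [← hcos, ← mul_add, ← intervalIntegral.integral_add
      ((continuous_div_P ha hb hd (by fun_prop)).intervalIntegrable _ _)
      ((continuous_div_P ha hb hd (by fun_prop)).intervalIntegrable _ _),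
      ← intervalIntegral.integral_const_mul]
    congr 1; ext θ; ring
  rw [intervalIntegral.integral_const, smul_eq_mul, sub_zero] at hE1
  rw [hsplit]
  generalize (∫ θ in (0:ℝ)..π, (1 - cos (θ / 2)) / P a b d θ ^ ((3:ℝ)/2)) = E at *
  -- `R = √(z² + (a + b)²)` lies between `a + b` and `a + b + |z|`.
  set R := √(d ^ 2 + 4 * (a * b)) with hR
  have hR2 : R ^ 2 = z ^ 2 + (a + b) ^ 2 := by
    rw [hR, Real.sq_sqrt (by positivity), hdz]; ring
  have hRpos : 0 < R := Real.sqrt_pos.2 (by positivity)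
  have hRl : a + b ≤ R := abs_le_of_sq_le_sq' (by nlinarith [sq_nonneg z]) hRpos.le |>.2
  have hRu : R ≤ a + b + |z| :=
    abs_le_of_sq_le_sq' (by nlinarith [abs_nonneg z, sq_abs z, mul_nonneg (abs_nonneg z) (add_pos ha hb).le])
      (by positivity) |>.2
  have hz : |z| ≤ d := abs_le_of_sq_le_sq (by nlinarith [sq_nonneg (a - b)]) hd.le
  have hw : |a - b| ≤ d := abs_le_of_sq_le_sq (by nlinarith [sq_nonneg z]) hd.le
  have hw' := abs_le.1 hw
  have hmain : d * |b * (2 / (d ^ 2 * R)) - 1 / d ^ 2| ≤ 2 / r := by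
    have e : b * (2 / (d ^ 2 * R)) - 1 / d ^ 2 = (2 * b - R) / (d ^ 2 * R) := by field_simp
    rw [e, abs_div, abs_of_pos (by positivity : 0 < d ^ 2 * R), mul_div_assoc',
      div_le_div_iff₀ (by positivity) hr]
    have h1 : |2 * b - R| ≤ 2 * d := abs_le.2 ⟨by linarith, by linarith⟩
    have h2 : r ≤ R := by linarith
    have h3 := mul_le_mul h1 h2 hr.le (by positivity)
    nlinarith [mul_le_mul_of_nonneg_left h3 hd.le]
  have herr : d * (b * E) ≤ (π / 2) / r := by
    have h1 : d * (b * E) ≤ d * (b * (π * (1 / (4 * (a * b) * d)))) := by gcongr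
    have h2 : d * (b * (π * (1 / (4 * (a * b) * d)))) = π / (4 * a) := by field_simp
    have h3 : π / (4 * a) ≤ π / (2 * r) :=
      div_le_div_of_nonneg_left pi_pos.le (by positivity) (by linarith)
    have h4 : π / (2 * r) = (π / 2) / r := by field_simp
    linarith
  calc _ ≤ d * (|b * (2 / (d ^ 2 * R)) - 1 / d ^ 2| + b * E) := by
        gcongr
        rw [add_sub_right_comm]
        refine (abs_add_le _ _).trans ?_
        rw [abs_of_nonneg (mul_nonneg hb.le hE0)]
    _ ≤ _ := by rw [mul_add, add_div]; exact add_le_add hmain herr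

/-! ### The remainder integrals -/

/-- One factor `√P` is bounded below by `d`, and `P` by `2ab(1 - cos θ)`, which cancels the
numerator; no logarithm appears because of the extra factor `d` on the left. -/
lemma mul_integral_one_sub_cos_le {a b d : ℝ} (ha : 0 < a) (hb : 0 < b) (hd : 0 < d) :
    d * ∫ θ in (0:ℝ)..π, b * (1 - cos θ) / P a b d θ ^ ((3:ℝ)/2) ≤ π / (2 * a) := by
  have h : ∫ θ in (0:ℝ)..π, b * (1 - cos θ) / P a b d θ ^ ((3:ℝ)/2)
      ≤ ∫ θ in (0:ℝ)..π, 1 / (2 * a * d) := by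
    refine intervalIntegral.integral_mono_on pi_pos.le
      ((continuous_div_P ha hb hd (by fun_prop)).intervalIntegrable _ _) (by simp) fun θ hθ => ?_
    have hp := P_pos ha hb hd θ
    rw [rpow_three_halves hp, div_le_div_iff₀ (by positivity) (by positivity)]
    have h2 : b * (1 - cos θ) * (2 * a) ≤ P a b d θ := by
      unfold P; nlinarith [sq_nonneg d]
    have h3 := mul_le_mul h2 (le_sqrt_P ha hb θ) hd.le hp.le
    linarith
  rw [intervalIntegral.integral_const, smul_eq_mul, sub_zero] at h
  calc _ ≤ d * (π * (1 / (2 * a * d))) := by gcongr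
    _ = _ := by field_simp

lemma integral_one_sub_cos_nonneg {a b d c : ℝ} (ha : 0 < a) (hb : 0 < b) (hd : 0 < d)
    (hc : 0 ≤ c) : 0 ≤ ∫ θ in (0:ℝ)..π, c * (1 - cos θ) / P a b d θ ^ ((3:ℝ)/2) := by
  refine intervalIntegral.integral_nonneg pi_pos.le fun θ _ => ?_
  have := Real.rpow_pos_of_pos (P_pos ha hb hd θ) ((3:ℝ)/2)
  exact div_nonneg (mul_nonneg hc (by linarith [Real.cos_le_one θ])) this.le

/-- Jordan's inequality `sin (θ / 2) ≥ θ / π` gives `√P ≥ (d + rθ / π) / 2`, and the resulting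
majorant `1 / (d + rθ / π)` integrates to a logarithm. -/
lemma integral_le_log {r a b d : ℝ} (hr : 0 < r) (hra : r ≤ 2 * a) (hrb : r ≤ 2 * b)
    (hd : 0 < d) :
    ∫ θ in (0:ℝ)..π, a * b * (1 - cos θ) / P a b d θ ^ ((3:ℝ)/2) ≤ π / r * log (1 + r / d) := by
  have ha : 0 < a := by linarith
  have hb : 0 < b := by linarith
  have hpos : ∀ θ ∈ Set.uIcc 0 π, 0 < d + r / π * θ := fun θ hθ => by
    rw [Set.uIcc_of_le pi_pos.le] at hθ
    have := mul_nonneg (div_pos hr pi_pos).le hθ.1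
    linarith
  have hint : ContinuousOn (fun θ => 1 / (d + r / π * θ)) (Set.uIcc 0 π) :=
    ContinuousOn.div (by fun_prop) (by fun_prop) fun θ hθ => (hpos θ hθ).ne'
  have h : ∫ θ in (0:ℝ)..π, a * b * (1 - cos θ) / P a b d θ ^ ((3:ℝ)/2)
      ≤ ∫ θ in (0:ℝ)..π, 1 / (d + r / π * θ) := by
    refine intervalIntegral.integral_mono_on pi_pos.le
      ((continuous_div_P ha hb hd (by fun_prop)).intervalIntegrable _ _)
      hint.intervalIntegrable fun θ hθ => ?_
    have hp := P_pos ha hb hd θ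
    have hq := hpos θ (by rwa [Set.uIcc_of_le pi_pos.le])
    have hs : θ / π ≤ sin (θ / 2) := by
      have := Real.mul_le_sin (x := θ / 2) (by linarith [hθ.1]) (by linarith [hθ.2])
      calc θ / π = 2 / π * (θ / 2) := by ring
        _ ≤ _ := this
    have hs0 : 0 ≤ θ / π := div_nonneg hθ.1 pi_pos.le
    have hab : r ^ 2 ≤ 4 * (a * b) := by nlinarith [mul_le_mul hra hrb hr.le (by linarith)]
    have hPl : d ^ 2 + (r / π * θ) ^ 2 ≤ P a b d θ := by
      rw [P_eq]
      have e : (r / π * θ) ^ 2 = r ^ 2 * (θ / π) ^ 2 := by ring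
      rw [e]
      gcongr
    have hsq : (d + r / π * θ) / 2 ≤ √(P a b d θ) := by
      apply Real.le_sqrt_of_sq_le
      nlinarith [sq_nonneg (d - r / π * θ), sq_nonneg (d + r / π * θ)]
    have hn : a * b * (1 - cos θ) * 2 ≤ P a b d θ := by
      unfold P; nlinarith [sq_nonneg d]
    rw [rpow_three_halves hp, div_le_div_iff₀ (by positivity) hq]
    have h3 := mul_le_mul hn hsq (by linarith) hp.le
    linarith
  have hlog : ∫ θ in (0:ℝ)..π, 1 / (d + r / π * θ) = π / r * log (1 + r / d) := by
    have hder : ∀ θ ∈ Set.uIcc 0 π,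
        HasDerivAt (fun θ => π / r * log (d + r / π * θ)) (1 / (d + r / π * θ)) θ := by
      intro θ hθ
      have h0 : HasDerivAt (fun θ => d + r / π * θ) (r / π * 1) θ :=
        ((hasDerivAt_id θ).const_mul (r / π)).const_add d
      refine ((h0.log (hpos θ hθ).ne').const_mul (π / r)).congr_deriv (Eq.symm ?_)
      have := (hpos θ hθ).ne'
      have := pi_pos.ne'
      field_simp
    rw [intervalIntegral.integral_eq_sub_of_hasDerivAt hder hint.intervalIntegrable, ← mul_sub,
      ← Real.log_div (by simp [pi_pos.ne']; linarith) (by simp [hd.ne'])]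
    congr 2
    have := pi_pos.ne'
    field_simp
    simp
  exact h.trans hlog.le

lemma log_one_add_div_le {r d : ℝ} (hr : 2 ≤ r) (hd : 0 < d) :
    log (1 + r / d) ≤ 1 + log r + (if d < 1 then log (1 / d) else 0) := by
  have hl2 : log 2 ≤ 1 := by linarith [Real.log_two_lt_d9]
  split_ifs with h
  · have : 1 + r / d ≤ 2 * r * (1 / d) := by
      field_simp; linarith
    calc _ ≤ log (2 * r * (1 / d)) := Real.log_le_log (by positivity) this
      _ = log 2 + log r + log (1 / d) := by
        rw [Real.log_mul (by positivity) (by positivity), Real.log_mul (by norm_num) (by positivity)]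
      _ ≤ _ := by linarith
  · have : 1 + r / d ≤ 2 * r := by
      have : r / d ≤ r := div_le_self (by linarith) (by linarith)
      linarith
    calc _ ≤ log (2 * r) := Real.log_le_log (by positivity) this
      _ = log 2 + log r := Real.log_mul (by norm_num) (by positivity)
      _ ≤ _ := by linarith

/-! ### Assembly -/

/-- Both component estimates, in terms of the scalars `a = r₀ + x₂`, `b = r₀ + y₂`, `z = x₁ - y₁`
and `d = |x - y|`. -/
lemma scalar_estimates {r a b z d : ℝ} (hr : 2 ≤ r) (hra : r ≤ 2 * a) (hrb : r ≤ 2 * b)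
    (hd : 0 < d) (hdz : d ^ 2 = z ^ 2 + (a - b) ^ 2) :
    |(2 * π)⁻¹ * (∫ θ in (0:ℝ)..π, (b * (b - a * cos θ)) / P a b d θ ^ ((3:ℝ)/2)) -
        (2 * π)⁻¹ * (-(a - b) * (1 / d ^ 2))| ≤
      10 / r * (1 + log r + (if d < 1 then log (1 / d) else 0)) ∧
    |(2 * π)⁻¹ * (∫ θ in (0:ℝ)..π, (b * z * cos θ) / P a b d θ ^ ((3:ℝ)/2)) -
        (2 * π)⁻¹ * (z * (1 / d ^ 2))| ≤ 10 / r := by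
  have hr0 : 0 < r := by linarith
  have hL := log_one_add_div_le hr hd
  have ha : 0 < a := by linarith
  have hb : 0 < b := by linarith
  have hii {f : ℝ → ℝ} (hf : Continuous f) :
      IntervalIntegrable (fun θ => f θ / P a b d θ ^ ((3:ℝ)/2)) volume 0 π :=
    (continuous_div_P ha hb hd hf).intervalIntegrable _ _
  have e1 : ∫ θ in (0:ℝ)..π, (b * (b - a * cos θ)) / P a b d θ ^ ((3:ℝ)/2)
      = -(a - b) * (∫ θ in (0:ℝ)..π, b / P a b d θ ^ ((3:ℝ)/2))
        + ∫ θ in (0:ℝ)..π, a * b * (1 - cos θ) / P a b d θ ^ ((3:ℝ)/2) := by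
    rw [← intervalIntegral.integral_const_mul, ← intervalIntegral.integral_add
      ((hii (by fun_prop)).const_mul _) (hii (by fun_prop))]
    congr 1; ext θ; ring
  have e2 : ∫ θ in (0:ℝ)..π, (b * z * cos θ) / P a b d θ ^ ((3:ℝ)/2)
      = z * (∫ θ in (0:ℝ)..π, b / P a b d θ ^ ((3:ℝ)/2))
        - z * ∫ θ in (0:ℝ)..π, b * (1 - cos θ) / P a b d θ ^ ((3:ℝ)/2) := by
    rw [← mul_sub, ← intervalIntegral.integral_sub (hii (by fun_prop)) (hii (by fun_prop)),
      ← intervalIntegral.integral_const_mul]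
    congr 1; ext θ; ring
  have hI := abs_integral_sub_le hr0 hra hrb hd hdz
  have hJ := integral_le_log hr0 hra hrb hd
  have hJ0 := integral_one_sub_cos_nonneg ha hb hd (mul_pos ha hb).le
  have hF := mul_integral_one_sub_cos_le ha hb hd
  have hF0 := integral_one_sub_cos_nonneg ha hb hd hb.le
  rw [e1, e2]
  generalize (∫ θ in (0:ℝ)..π, b / P a b d θ ^ ((3:ℝ)/2)) = I at *
  generalize (∫ θ in (0:ℝ)..π, a * b * (1 - cos θ) / P a b d θ ^ ((3:ℝ)/2)) = J at *
  generalize (∫ θ in (0:ℝ)..π, b * (1 - cos θ) / P a b d θ ^ ((3:ℝ)/2)) = F at *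
  have hzd : |z| ≤ d := abs_le_of_sq_le_sq (by nlinarith [sq_nonneg (a - b)]) hd.le
  have hwd : |a - b| ≤ d := abs_le_of_sq_le_sq (by nlinarith [sq_nonneg z]) hd.le
  have hpi : (2 * π)⁻¹ ≤ 1 := inv_le_one_of_one_le₀ (by linarith [Real.pi_gt_three])
  have hpi0 : 0 < (2 * π)⁻¹ := by positivity
  have hpi4 := Real.pi_le_four
  have hwI : |a - b| * |I - 1 / d ^ 2| ≤ 4 / r :=
    (mul_le_mul_of_nonneg_right hwd (abs_nonneg _)).trans (hI.trans (by gcongr; linarith))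
  have hzI : |z| * |I - 1 / d ^ 2| ≤ 4 / r :=
    (mul_le_mul_of_nonneg_right hzd (abs_nonneg _)).trans (hI.trans (by gcongr; linarith))
  have hscale {t B : ℝ} (h : |t| ≤ B) : |(2 * π)⁻¹ * t| ≤ B := by
    rw [abs_mul, abs_of_pos hpi0]
    nlinarith [abs_nonneg t]
  rw [← mul_sub, ← mul_sub]
  constructor
  · apply hscale
    set L := 1 + log r + (if d < 1 then log (1 / d) else 0)
    have hL1 : 1 ≤ L := by
      have h1 : 0 ≤ log r := Real.log_nonneg (by linarith)
      have h2 : 0 ≤ (if d < 1 then log (1 / d) else 0) := by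
        split_ifs with h
        · exact Real.log_nonneg (by rw [le_div_iff₀ hd]; linarith)
        · exact le_rfl
      simp only [L]; linarith
    have hl0 : 0 ≤ log (1 + r / d) :=
      Real.log_nonneg (by have := div_pos hr0 hd; linarith)
    have hJ' : J ≤ 4 / r * L := hJ.trans (by gcongr)
    have h4 : 4 / r ≤ 4 / r * L := le_mul_of_one_le_right (by positivity) hL1
    have h10 : 4 / r * L + 4 / r * L ≤ 10 / r * L := by
      have : 0 ≤ L / r := by positivity
      have e : 10 / r * L - (4 / r * L + 4 / r * L) = 2 * (L / r) := by ring
      linarith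
    have e : -(a - b) * I + J - -(a - b) * (1 / d ^ 2) = -(a - b) * (I - 1 / d ^ 2) + J := by ring
    rw [e]
    calc |-(a - b) * (I - 1 / d ^ 2) + J|
      _ ≤ |-(a - b) * (I - 1 / d ^ 2)| + |J| := abs_add_le _ _
      _ = |a - b| * |I - 1 / d ^ 2| + J := by rw [abs_mul, abs_neg, abs_of_nonneg hJ0]
      _ ≤ _ := by linarith
  · apply hscale
    have hzF : |z| * F ≤ 4 / r :=
      (mul_le_mul_of_nonneg_right hzd hF0).trans (hF.trans (by gcongr))
    have e : z * I - z * F - z * (1 / d ^ 2) = z * (I - 1 / d ^ 2) - z * F := by ring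
    rw [e]
    calc |z * (I - 1 / d ^ 2) - z * F|
      _ ≤ |z * (I - 1 / d ^ 2)| + |z * F| := by
        rw [sub_eq_add_neg, ← abs_neg (z * F)]; exact abs_add_le _ _
      _ = |z| * |I - 1 / d ^ 2| + |z| * F := by rw [abs_mul, abs_mul, abs_of_nonneg hF0]
      _ ≤ 4 / r + 4 / r := add_le_add hzI hzF
      _ ≤ 10 / r := by rw [← add_div]; gcongr; norm_num

/-- Estimate on the components of `D = G − K` for `r₀ ≥ 2`. -/
theorem stmt0 :
    ∃ C > (0:ℝ), ∀ r₀ : ℝ, 2 ≤ r₀ →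
      ∀ x y : E2, x ≠ y → |x 1| ≤ r₀ / 2 → |y 1| ≤ r₀ / 2 →
        |G1 r₀ x y - K (x - y) 0| ≤
          C / r₀ * (1 + Real.log r₀ +
            (if ‖x - y‖ < 1 then Real.log (1 / ‖x - y‖) else 0)) ∧
        |G2 r₀ x y - K (x - y) 1| ≤ C / r₀ := by
  refine ⟨10, by norm_num, fun r hr x y hxy hx hy => ?_⟩
  have hx' := abs_le.1 hx
  have hy' := abs_le.1 hy
  have hxy0 : x - y ≠ 0 := sub_ne_zero.2 hxy
  have hd : 0 < ‖x - y‖ := norm_pos_iff.2 hxy0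
  have hK0 : K (x - y) 0 = (2 * π)⁻¹ * (-(x 1 - y 1) * (1 / ‖x - y‖ ^ 2)) := by
    simp [K, hxy0]; ring
  have hK1 : K (x - y) 1 = (2 * π)⁻¹ * ((x 0 - y 0) * (1 / ‖x - y‖ ^ 2)) := by
    simp [K, hxy0]; ring
  have hdz : ‖x - y‖ ^ 2 = (x 0 - y 0) ^ 2 + ((r + x 1) - (r + y 1)) ^ 2 := by
    rw [EuclideanSpace.norm_sq_eq]; simp [Fin.sum_univ_two]
  have hG1 : G1 r x y = (2 * π)⁻¹ * ∫ θ in (0:ℝ)..π,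
      ((r + y 1) * ((r + y 1) - (r + x 1) * cos θ)) /
        P (r + x 1) (r + y 1) ‖x - y‖ θ ^ ((3:ℝ)/2) := rfl
  have hG2 : G2 r x y = (2 * π)⁻¹ * ∫ θ in (0:ℝ)..π,
      ((r + y 1) * (x 0 - y 0) * cos θ) /
        P (r + x 1) (r + y 1) ‖x - y‖ θ ^ ((3:ℝ)/2) := rfl
  have hw : x 1 - y 1 = (r + x 1) - (r + y 1) := by ring
  rw [hG1, hG2, hK0, hK1, hw]
  exact scalar_estimates hr (by linarith) (by linarith) hd hdz
end

section
/- Fix α > 1 and set r₀ = r₀(ε) = |log ε|^α. There exist constants C > 0 and ε₀ ∈ (0,1) such that for every ε ∈ (0, ε₀) and all points x, y ∈ ℝ² with x ≠ y, |x₂| ≤ r₀/2 and |y₂| ≤ r₀/2, one has |G(x,y) − K(x−y)| ≤ (C/|log ε|^α)(1 + log|log ε| + χ_{(0,1)}(|x−y|) log(1/|x−y|)), where χ_{(0,1)}(s) equals 1 if 0 < s < 1 and 0 otherwise. -/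
/-!
Write `a = r₀ + x₂`, `b = r₀ + y₂`, `d = |x - y|`, and let `q(θ)` be the square root of
`d² + 2ab(1 - cos θ)`. Decomposing `b - a cos θ = -(a - b) + a (1 - cos θ)` and
`cos θ = 1 - (1 - cos θ)` gives

`2π G = b I₀ · (-(x₂ - y₂), x₁ - y₁) + (ab I₁, -b (x₁ - y₁) I₁)`,

with `I₀ = ∫ q⁻³` and `I₁ = ∫ (1 - cos θ) q⁻³` over `[0, π]`. The kernel `K` corresponds to replacing
`b I₀` by `d⁻²` and `I₁` by `0`.

* The terms with `I₁` are small because `q³ ≥ 2ab(1 - cos θ) d` (`I1_le`), and because `2ab I₁` is at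
  most `J = ∫ q⁻¹` (`two_ab_I1_le`).
* By Jordan's inequality `1 - cos θ ≥ 2θ²/π²`, so `J = O(r₀⁻¹ log (1 + r₀/d))` (`J_le`). This is the
  only source of logarithms.
* The integral `∫ cos (θ/2) q⁻³` is elementary (`integral_cos_half`) and agrees with `d⁻² / √(ab)` up
  to an error `O(1/(ab d))`. Since `0 ≤ 1 - cos (θ/2) ≤ 1 - cos θ`, replacing `cos (θ/2)` by `1` costs
  at most `I₁`, so `d |√(ab) I₀ - d⁻²| = O(1/r₀)` (`main_aux`). Replacing `√(ab)` by `b` costs at most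
  `|b - a| d I₀ ≤ d² I₀ ≤ J`.
-/

open MeasureTheory Real
open scoped RealInnerProductSpace

/-! ### The auxiliary integrals -/

/-- The square root of the denominator `d² + 2ab(1 - cos θ)` of the kernel `G`; geometrically, the
distance between two points on coaxial circles of radii `a`, `b` at relative angle `θ`. -/
noncomputable def qd (a b d θ : ℝ) : ℝ := √(d ^ 2 + 2 * a * b * (1 - Real.cos θ))

/-- The integral `∫₀^π q⁻³`. -/
noncomputable def I0 (a b d : ℝ) : ℝ := ∫ θ in (0:ℝ)..Real.pi, 1 / qd a b d θ ^ 3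

/-- The integral `∫₀^π (1 - cos θ) q⁻³`. -/
noncomputable def I1 (a b d : ℝ) : ℝ := ∫ θ in (0:ℝ)..Real.pi, (1 - Real.cos θ) / qd a b d θ ^ 3

/-- The integral `∫₀^π q⁻¹`. -/
noncomputable def J (a b d : ℝ) : ℝ := ∫ θ in (0:ℝ)..Real.pi, 1 / qd a b d θ

lemma arg_pos {a b d : ℝ} (ha : 0 < a) (hb : 0 < b) (hd : 0 < d) (θ : ℝ) :
    0 < d ^ 2 + 2 * a * b * (1 - Real.cos θ) := by
  have := Real.cos_le_one θ
  have h : 0 ≤ 2 * a * b * (1 - Real.cos θ) := mul_nonneg (by positivity) (by linarith)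
  positivity

lemma qd_pos {a b d : ℝ} (ha : 0 < a) (hb : 0 < b) (hd : 0 < d) (θ : ℝ) : 0 < qd a b d θ :=
  Real.sqrt_pos.2 (arg_pos ha hb hd θ)

lemma qd_sq {a b d : ℝ} (ha : 0 < a) (hb : 0 < b) (hd : 0 < d) (θ : ℝ) :
    qd a b d θ ^ 2 = d ^ 2 + 2 * a * b * (1 - Real.cos θ) :=
  Real.sq_sqrt (arg_pos ha hb hd θ).le

lemma le_qd {a b d : ℝ} (ha : 0 < a) (hb : 0 < b) (θ : ℝ) : d ≤ qd a b d θ := by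
  apply Real.le_sqrt_of_sq_le
  have := Real.cos_le_one θ
  have h : 0 ≤ 2 * a * b * (1 - Real.cos θ) := mul_nonneg (by positivity) (by linarith)
  linarith

lemma rpow_eq {a b d : ℝ} (ha : 0 < a) (hb : 0 < b) (hd : 0 < d) (θ : ℝ) :
    (d ^ 2 + 2 * a * b * (1 - Real.cos θ)) ^ ((3:ℝ)/2) = qd a b d θ ^ 3 := by
  rw [qd, Real.sqrt_eq_rpow, ← Real.rpow_mul_natCast (arg_pos ha hb hd θ).le]
  norm_num

@[fun_prop] lemma continuous_qd (a b d : ℝ) : Continuous (qd a b d) := by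
  unfold qd
  fun_prop

/-- Every integrand `f / q ^ n` with `f` continuous is integrable, as `q` is bounded away from `0`. -/
lemma intble {a b d : ℝ} (ha : 0 < a) (hb : 0 < b) (hd : 0 < d) {f : ℝ → ℝ} (hf : Continuous f)
    (n : ℕ) : IntervalIntegrable (fun θ => f θ / qd a b d θ ^ n) volume 0 Real.pi := by
  apply Continuous.intervalIntegrable
  exact hf.div (by fun_prop) fun θ => (pow_pos (qd_pos ha hb hd θ) n).ne'

/-! ### Elementary bounds -/

lemma I0_nonneg {a b d : ℝ} (ha : 0 < a) (hb : 0 < b) (hd : 0 < d) : 0 ≤ I0 a b d :=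
  intervalIntegral.integral_nonneg Real.pi_pos.le fun θ _ => by
    have := qd_pos ha hb hd θ
    positivity

lemma I1_nonneg {a b d : ℝ} (ha : 0 < a) (hb : 0 < b) (hd : 0 < d) : 0 ≤ I1 a b d :=
  intervalIntegral.integral_nonneg Real.pi_pos.le fun θ _ => by
    have := qd_pos ha hb hd θ
    have h := Real.cos_le_one θ
    exact div_nonneg (by linarith) (by positivity)

lemma I1_le {a b d : ℝ} (ha : 0 < a) (hb : 0 < b) (hd : 0 < d) :
    I1 a b d ≤ Real.pi / (2 * a * b * d) := by
  have h : I1 a b d ≤ ∫ θ in (0:ℝ)..Real.pi, 1 / (2 * a * b * d) := by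
    apply intervalIntegral.integral_mono_on Real.pi_pos.le
      (intble ha hb hd (by fun_prop) 3) (by simp)
    intro θ _
    have hq := qd_pos ha hb hd θ
    have h1 := Real.cos_le_one θ
    rw [div_le_div_iff₀ (by positivity) (by positivity)]
    have h2 := qd_sq ha hb hd θ
    have h3 := le_qd (d := d) ha hb θ
    have h4 : 0 ≤ 2 * a * b * (1 - Real.cos θ) := mul_nonneg (by positivity) (by linarith)
    calc (1 - Real.cos θ) * (2 * a * b * d) = (2 * a * b * (1 - Real.cos θ)) * d := by ring
      _ ≤ qd a b d θ ^ 2 * qd a b d θ := by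
        apply mul_le_mul _ h3 hd.le (by positivity)
        rw [h2]; nlinarith
      _ = 1 * qd a b d θ ^ 3 := by ring
  refine h.trans_eq ?_
  rw [intervalIntegral.integral_const, smul_eq_mul]
  ring

lemma two_ab_I1_le {a b d : ℝ} (ha : 0 < a) (hb : 0 < b) (hd : 0 < d) :
    2 * a * b * I1 a b d ≤ J a b d := by
  rw [I1, ← intervalIntegral.integral_const_mul]
  apply intervalIntegral.integral_mono_on Real.pi_pos.le
    ((intble ha hb hd (by fun_prop) 3).const_mul _)
    (by simpa using intble ha hb hd (f := fun _ => 1) (by fun_prop) 1)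
  intro θ _
  have hq := qd_pos ha hb hd θ
  rw [← mul_div_assoc, div_le_div_iff₀ (by positivity) (by positivity)]
  have h2 := qd_sq ha hb hd θ
  calc _ ≤ qd a b d θ ^ 2 * qd a b d θ := by
        gcongr
        rw [h2]; nlinarith
    _ = _ := by ring

lemma sq_I0_le {a b d : ℝ} (ha : 0 < a) (hb : 0 < b) (hd : 0 < d) :
    d ^ 2 * I0 a b d ≤ J a b d := by
  rw [I0, ← intervalIntegral.integral_const_mul]
  apply intervalIntegral.integral_mono_on Real.pi_pos.le
    ((intble ha hb hd (by fun_prop) 3).const_mul _)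
    (by simpa using intble ha hb hd (f := fun _ => 1) (by fun_prop) 1)
  intro θ _
  have hq := qd_pos ha hb hd θ
  rw [← mul_div_assoc, div_le_div_iff₀ (by positivity) (by positivity)]
  have h3 := le_qd (d := d) ha hb θ
  calc _ ≤ qd a b d θ ^ 2 * qd a b d θ := by
        rw [mul_one]; gcongr
    _ = _ := by ring

/-- The logarithmic bound on `∫ q⁻¹`: by Jordan's inequality `q ≥ (d + cθ)/2` with `c = R/π`. -/
lemma J_le {a b d R : ℝ} (hR : 0 < R) (ha : R / 2 ≤ a) (hb : R / 2 ≤ b) (hd : 0 < d) :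
    J a b d ≤ 2 * Real.pi / R * (Real.log (d + R) - Real.log d) := by
  have ha0 : 0 < a := by linarith
  have hb0 : 0 < b := by linarith
  have hpi := Real.pi_pos
  set c := R / Real.pi with hc
  have hc0 : 0 < c := by positivity
  have hpos : ∀ θ ∈ Set.uIcc 0 Real.pi, 0 < d + c * θ := by
    intro θ hθ
    rw [Set.uIcc_of_le hpi.le] at hθ
    have := hθ.1
    positivity
  have hint : IntervalIntegrable (fun θ => 2 / (d + c * θ)) volume 0 Real.pi := by
    apply ContinuousOn.intervalIntegrable
    exact ContinuousOn.div (by fun_prop) (by fun_prop) fun θ hθ => (hpos θ hθ).ne'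
  have h : J a b d ≤ ∫ θ in (0:ℝ)..Real.pi, 2 / (d + c * θ) := by
    apply intervalIntegral.integral_mono_on hpi.le
      (by simpa using intble ha0 hb0 hd (f := fun _ => 1) (by fun_prop) 1) hint
    intro θ hθ
    have h0 := hpos θ (by rwa [Set.uIcc_of_le hpi.le])
    have hq := qd_pos ha0 hb0 hd θ
    rw [div_le_div_iff₀ hq h0]
    have hJ : Real.cos θ ≤ 1 - 2 / Real.pi ^ 2 * θ ^ 2 :=
      Real.cos_le_one_sub_mul_cos_sq (by rw [abs_of_nonneg hθ.1]; exact hθ.2)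
    have hab : R ^ 2 / 4 ≤ a * b := by nlinarith
    have h5 : (c * θ) ^ 2 ≤ 2 * a * b * (1 - Real.cos θ) := by
      calc (c * θ) ^ 2 = 2 * (R ^ 2 / 4) * (2 / Real.pi ^ 2 * θ ^ 2) := by
            rw [hc]; field_simp; norm_num
        _ ≤ 2 * (a * b) * (1 - Real.cos θ) := by
            gcongr
            linarith
        _ = _ := by ring
    have h6 : d + c * θ ≤ 2 * qd a b d θ := by
      apply le_of_sq_le_sq _ (by positivity)
      rw [mul_pow, qd_sq ha0 hb0 hd]
      nlinarith [sq_nonneg (d - c * θ)]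
    linarith
  refine h.trans_eq ?_
  have hder : ∀ θ ∈ Set.uIcc 0 Real.pi,
      HasDerivAt (fun θ => 2 / c * Real.log (d + c * θ)) (2 / (d + c * θ)) θ := by
    intro θ hθ
    have h1 : HasDerivAt (fun θ => d + c * θ) c θ := by
      simpa using ((hasDerivAt_id θ).const_mul c).const_add d
    refine ((h1.log (hpos θ hθ).ne').const_mul (2 / c)).congr_deriv ?_
    field_simp
  rw [intervalIntegral.integral_eq_sub_of_hasDerivAt hder hint]
  have : c * Real.pi = R := by rw [hc]; field_simp
  rw [this, mul_zero, add_zero, ← mul_sub, hc]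
  congr 1
  field_simp

/-! ### Comparison of `b I₀` with `1/d²` -/

/-- The antiderivative of `cos (θ/2) q⁻³` is `2 sin (θ/2) / (d² q)`. -/
lemma integral_cos_half {a b d : ℝ} (ha : 0 < a) (hb : 0 < b) (hd : 0 < d) :
    ∫ θ in (0:ℝ)..Real.pi, Real.cos (θ / 2) / qd a b d θ ^ 3
      = 2 / (d ^ 2 * √(d ^ 2 + 4 * (a * b))) := by
  have hder : ∀ θ ∈ Set.uIcc 0 Real.pi,
      HasDerivAt (fun θ => 2 / d ^ 2 * (Real.sin (θ / 2) / qd a b d θ))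
        (Real.cos (θ / 2) / qd a b d θ ^ 3) θ := by
    intro θ _
    have hq := qd_pos ha hb hd θ
    have hD : HasDerivAt (fun θ => d ^ 2 + 2 * a * b * (1 - Real.cos θ))
        (2 * a * b * Real.sin θ) θ := by
      simpa using (((Real.hasDerivAt_cos θ).const_sub 1).const_mul (2 * a * b)).const_add (d ^ 2)
    have hQ : HasDerivAt (qd a b d) (2 * a * b * Real.sin θ / (2 * qd a b d θ)) θ :=
      hD.sqrt (arg_pos ha hb hd θ).ne'
    have hs : HasDerivAt (fun θ : ℝ => Real.sin (θ / 2)) (Real.cos (θ / 2) * (1 / 2)) θ :=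
      ((hasDerivAt_id θ).div_const 2).sin
    refine ((hs.div hQ hq.ne').const_mul (2 / d ^ 2)).congr_deriv ?_
    have h2 := qd_sq ha hb hd θ
    have e1 : Real.sin θ = 2 * Real.sin (θ / 2) * Real.cos (θ / 2) := by
      rw [← Real.sin_two_mul]; ring_nf
    have e2 : Real.cos θ = 1 - 2 * Real.sin (θ / 2) ^ 2 := by
      have := Real.cos_two_mul (θ / 2)
      rw [show 2 * (θ / 2) = θ by ring] at this
      have := Real.sin_sq_add_cos_sq (θ / 2)
      linarith
    rw [e2] at h2
    rw [e1]
    field_simp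
    linear_combination Real.cos (θ / 2) * h2
  rw [intervalIntegral.integral_eq_sub_of_hasDerivAt hder (intble ha hb hd (by fun_prop) 3)]
  simp [qd]
  field_simp
  congr 2
  ring

/-- The main comparison: up to `O(1/√(ab))`, `d √(ab) I₀` equals `1/d`. -/
lemma main_aux {a b d s : ℝ} (ha : 0 < a) (hb : 0 < b) (hd : 0 < d) (hs : 0 < s)
    (hss : s ^ 2 = a * b) :
    d * |s * I0 a b d - 1 / d ^ 2| ≤ (Real.pi / 2 + 1 / 4) / s := by
  have hc := integral_cos_half ha hb hd
  set Q := √(d ^ 2 + 4 * (a * b)) with hQ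
  have hQ2 : Q ^ 2 = d ^ 2 + 4 * s ^ 2 := by
    rw [hQ, Real.sq_sqrt (by positivity), hss]
  have hQ0 : 0 < Q := by positivity
  set E := ∫ θ in (0:ℝ)..Real.pi, (1 - Real.cos (θ / 2)) / qd a b d θ ^ 3 with hE
  have hI : I0 a b d = 2 / (d ^ 2 * Q) + E := by
    rw [← hc, hE, I0, ← intervalIntegral.integral_add (intble ha hb hd (by fun_prop) 3)
      (intble ha hb hd (by fun_prop) 3)]
    congr 1; ext θ; ring
  have hE0 : 0 ≤ E := intervalIntegral.integral_nonneg Real.pi_pos.le fun θ _ => by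
    have := qd_pos ha hb hd θ
    have h := Real.cos_le_one (θ / 2)
    exact div_nonneg (by linarith) (by positivity)
  have hE1 : E ≤ Real.pi / (2 * a * b * d) := by
    refine le_trans ?_ (I1_le ha hb hd)
    apply intervalIntegral.integral_mono_on Real.pi_pos.le (intble ha hb hd (by fun_prop) 3)
      (intble ha hb hd (by fun_prop) 3)
    intro θ hθ
    have := qd_pos ha hb hd θ
    have h : Real.cos θ ≤ Real.cos (θ / 2) :=
      Real.cos_le_cos_of_nonneg_of_le_pi (by linarith [hθ.1]) hθ.2 (by linarith [hθ.1])
    gcongr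
  have hE2 : d * s * E ≤ (Real.pi / 2) / s := by
    calc d * s * E ≤ d * s * (Real.pi / (2 * a * b * d)) := by gcongr
      _ = d * s * (Real.pi / (2 * s ^ 2 * d)) := by rw [hss]; ring_nf
      _ = _ := by field_simp
  have hsQ : 2 * s ≤ Q := by nlinarith
  have hdQ : d ≤ Q := by nlinarith
  -- rationalising, `1 - 2s/Q = d² / (Q (Q + 2s))`
  have h2 : 1 / d ^ 2 - s * (2 / (d ^ 2 * Q)) = 1 / (Q * (Q + 2 * s)) := by
    field_simp
    linear_combination hQ2
  have h3 : d * (1 / (Q * (Q + 2 * s))) ≤ 1 / 4 / s := by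
    rw [mul_one_div, div_div, div_le_div_iff₀ (by positivity) (by positivity)]
    nlinarith
  have h4 : 0 ≤ 1 / (Q * (Q + 2 * s)) := by positivity
  have h5 : s * I0 a b d - 1 / d ^ 2 = s * E - 1 / (Q * (Q + 2 * s)) := by
    rw [hI, ← h2]; ring
  rw [h5]
  have h6 : |s * E - 1 / (Q * (Q + 2 * s))| ≤ s * E + 1 / (Q * (Q + 2 * s)) := by
    rw [abs_le]
    have : 0 ≤ s * E := by positivity
    constructor <;> linarith
  calc _ ≤ d * (s * E + 1 / (Q * (Q + 2 * s))) := by gcongr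
    _ = d * s * E + d * (1 / (Q * (Q + 2 * s))) := by ring
    _ ≤ (Real.pi / 2) / s + 1 / 4 / s := by linarith
    _ = _ := by ring

/-- The coefficient of `(-(x₂ - y₂), x₁ - y₁)` in `2π (G - K)`, times `d`. -/
lemma main_coeff {a b d R : ℝ} (hR : 0 < R) (ha : R / 2 ≤ a) (hb : R / 2 ≤ b) (hd : 0 < d)
    (hab : |a - b| ≤ d) :
    d * |b * I0 a b d - 1 / d ^ 2| ≤ J a b d + 4 / R := by
  have ha0 : 0 < a := by linarith
  have hb0 : 0 < b := by linarith
  set s := √(a * b) with hs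
  have hss : s ^ 2 = a * b := Real.sq_sqrt (by positivity)
  have hs0 : 0 < s := by positivity
  have hsR : R / 2 ≤ s := Real.le_sqrt_of_sq_le (by nlinarith)
  have hm := main_aux ha0 hb0 hd hs0 hss
  have hpi := Real.pi_lt_d2
  have h1 : (Real.pi / 2 + 1 / 4) / s ≤ 4 / R := by
    rw [div_le_div_iff₀ hs0 hR]; nlinarith
  -- `|b - √(ab)| = b |b - a| / (b + √(ab))`
  have h2 : |b - s| ≤ d := by
    have e : (b - s) * (b + s) = b * (b - a) := by linear_combination -hss
    have e2 : |b - s| * (b + s) = b * |a - b| := by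
      rw [abs_sub_comm a b, ← abs_of_pos hb0, ← abs_mul, abs_of_pos hb0, ← e, abs_mul,
        abs_of_pos (by positivity : 0 < b + s)]
    have e3 : |b - s| * (b + s) ≤ d * (b + s) := by
      rw [e2]; nlinarith [abs_nonneg (a - b)]
    exact le_of_mul_le_mul_right e3 (by positivity)
  have h0 := I0_nonneg ha0 hb0 hd
  have hJ := sq_I0_le ha0 hb0 hd
  calc d * |b * I0 a b d - 1 / d ^ 2|
      = d * |(b - s) * I0 a b d + (s * I0 a b d - 1 / d ^ 2)| := by ring_nf
    _ ≤ d * (|b - s| * I0 a b d + |s * I0 a b d - 1 / d ^ 2|) := by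
        gcongr
        refine (abs_add_le _ _).trans_eq ?_
        rw [abs_mul, abs_of_nonneg h0]
    _ ≤ d * (d * I0 a b d + |s * I0 a b d - 1 / d ^ 2|) := by gcongr
    _ = d ^ 2 * I0 a b d + d * |s * I0 a b d - 1 / d ^ 2| := by ring
    _ ≤ _ := by linarith

/-! ### The kernel estimate -/

lemma G1_eq {r : ℝ} {x y : E2} (ha : 0 < r + x 1) (hb : 0 < r + y 1) (hd : 0 < ‖x - y‖) :
    G1 r x y = (2 * Real.pi)⁻¹ * (-(x 1 - y 1) * ((r + y 1) * I0 (r + x 1) (r + y 1) ‖x - y‖)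
      + (r + x 1) * (r + y 1) * I1 (r + x 1) (r + y 1) ‖x - y‖) := by
  rw [G1, I0, I1]
  congr 1
  rw [← intervalIntegral.integral_const_mul, ← intervalIntegral.integral_const_mul,
    ← intervalIntegral.integral_const_mul, ← intervalIntegral.integral_add
      (((intble ha hb hd (by fun_prop) 3).const_mul _).const_mul _)
      ((intble ha hb hd (by fun_prop) 3).const_mul _)]
  congr 1; ext θ
  rw [rpow_eq ha hb hd]
  ring

lemma G2_eq {r : ℝ} {x y : E2} (ha : 0 < r + x 1) (hb : 0 < r + y 1) (hd : 0 < ‖x - y‖) :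
    G2 r x y = (2 * Real.pi)⁻¹ * ((x 0 - y 0) * ((r + y 1) * I0 (r + x 1) (r + y 1) ‖x - y‖)
      - (x 0 - y 0) * (r + y 1) * I1 (r + x 1) (r + y 1) ‖x - y‖) := by
  rw [G2, I0, I1]
  congr 1
  rw [← intervalIntegral.integral_const_mul, ← intervalIntegral.integral_const_mul,
    ← intervalIntegral.integral_const_mul, ← intervalIntegral.integral_sub
      (((intble ha hb hd (by fun_prop) 3).const_mul _).const_mul _)
      ((intble ha hb hd (by fun_prop) 3).const_mul _)]
  congr 1; ext θ
  rw [rpow_eq ha hb hd]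
  ring

lemma E2_norm_le (v : E2) : ‖v‖ ≤ |v 0| + |v 1| := by
  rw [EuclideanSpace.norm_eq, Fin.sum_univ_two, Real.sqrt_le_left (by positivity)]
  simp only [Real.norm_eq_abs]
  nlinarith [abs_nonneg (v 0), abs_nonneg (v 1)]

lemma E2_coord_le (v : E2) (i : Fin 2) : |v i| ≤ ‖v‖ := by
  simpa using PiLp.norm_apply_le v i

/-- The estimate for a general radius `R`, before inserting `R = |log ε| ^ α`. -/
lemma kernel_bound {R : ℝ} (hR : 0 < R) {x y : E2} (hxy : x ≠ y) (hx : |x 1| ≤ R / 2)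
    (hy : |y 1| ≤ R / 2) :
    ‖Gvec R x y - K (x - y)‖ ≤
      (16 * (Real.log (‖x - y‖ + R) - Real.log ‖x - y‖) + 12) / R := by
  have hne : x - y ≠ 0 := sub_ne_zero.2 hxy
  have hd : 0 < ‖x - y‖ := norm_pos_iff.2 hne
  set a := R + x 1 with ha_def
  set b := R + y 1 with hb_def
  have ha : R / 2 ≤ a := by linarith [(abs_le.1 hx).1]
  have hb : R / 2 ≤ b := by linarith [(abs_le.1 hy).1]
  have ha0 : 0 < a := by linarith
  have hb0 : 0 < b := by linarith
  have hpi := Real.pi_pos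
  have hpi2 := Real.pi_lt_d2
  have hpi3 := Real.pi_gt_d2
  set d := ‖x - y‖ with hd_def
  have hz0 : |x 0 - y 0| ≤ d := by simpa using E2_coord_le (x - y) 0
  have hz1 : |x 1 - y 1| ≤ d := by simpa using E2_coord_le (x - y) 1
  have hab : |a - b| ≤ d := by
    rw [ha_def, hb_def, add_sub_add_left_eq_sub]; exact hz1
  set T := b * I0 a b d - 1 / d ^ 2 with hT
  have hmain : d * |T| ≤ J a b d + 4 / R := main_coeff hR ha hb hd hab
  have hJ := J_le hR ha hb hd
  have hI1 := I1_le ha0 hb0 hd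
  have hI1J := two_ab_I1_le ha0 hb0 hd
  have hI10 := I1_nonneg ha0 hb0 hd
  have c0 : (Gvec R x y - K (x - y)) 0
      = (2 * Real.pi)⁻¹ * (-(x 1 - y 1) * T + a * b * I1 a b d) := by
    have : (Gvec R x y - K (x - y)) 0
        = G1 R x y - (2 * Real.pi * d ^ 2)⁻¹ * (-(x 1 - y 1)) := by
      simp [Gvec, K, hne, hd_def]
    rw [this, G1_eq ha0 hb0 hd, hT, mul_inv]
    ring
  have c1 : (Gvec R x y - K (x - y)) 1
      = (2 * Real.pi)⁻¹ * ((x 0 - y 0) * T - (x 0 - y 0) * b * I1 a b d) := by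
    have : (Gvec R x y - K (x - y)) 1
        = G2 R x y - (2 * Real.pi * d ^ 2)⁻¹ * (x 0 - y 0) := by
      simp [Gvec, K, hne, hd_def]
    rw [this, G2_eq ha0 hb0 hd, hT, mul_inv]
    ring
  have b0 : |-(x 1 - y 1) * T + a * b * I1 a b d| ≤ d * |T| + J a b d / 2 := by
    refine (abs_add_le _ _).trans ?_
    rw [abs_mul, abs_neg, abs_of_nonneg (by positivity : 0 ≤ a * b * I1 a b d)]
    have := mul_le_mul_of_nonneg_right hz1 (abs_nonneg T)
    linarith
  have b1 : |(x 0 - y 0) * T - (x 0 - y 0) * b * I1 a b d| ≤ d * |T| + 4 / R := by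
    have h1 : d * b * I1 a b d ≤ 4 / R := by
      calc d * b * I1 a b d ≤ d * b * (Real.pi / (2 * a * b * d)) := by gcongr
        _ = Real.pi / (2 * a) := by field_simp
        _ ≤ 4 / R := by
          rw [div_le_div_iff₀ (by positivity) hR]
          nlinarith
    have h2 : |x 0 - y 0| * b * I1 a b d ≤ d * b * I1 a b d := by gcongr
    refine (abs_sub _ _).trans ?_
    rw [abs_mul, abs_mul, abs_mul, abs_of_pos hb0, abs_of_nonneg hI10]
    have := mul_le_mul_of_nonneg_right hz0 (abs_nonneg T)
    linarith
  have hinv : (2 * Real.pi)⁻¹ ≤ 1 := inv_le_one_of_one_le₀ (by linarith)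
  have hinv0 : 0 ≤ (2 * Real.pi)⁻¹ := by positivity
  have hL : 0 ≤ Real.log (d + R) - Real.log d :=
    sub_nonneg.2 (Real.log_le_log hd (by linarith))
  have hJ' : 5 / 2 * J a b d ≤ 16 * (Real.log (d + R) - Real.log d) / R := by
    calc 5 / 2 * J a b d
        ≤ 5 / 2 * (2 * Real.pi / R * (Real.log (d + R) - Real.log d)) := by gcongr
      _ = (5 * Real.pi) * (Real.log (d + R) - Real.log d) / R := by ring
      _ ≤ _ := by gcongr; linarith
  calc _ ≤ _ := E2_norm_le _
    _ = (2 * Real.pi)⁻¹ * (|-(x 1 - y 1) * T + a * b * I1 a b d|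
        + |(x 0 - y 0) * T - (x 0 - y 0) * b * I1 a b d|) := by
        rw [c0, c1, abs_mul, abs_mul, abs_of_nonneg hinv0]; ring
    _ ≤ 1 * (|-(x 1 - y 1) * T + a * b * I1 a b d|
        + |(x 0 - y 0) * T - (x 0 - y 0) * b * I1 a b d|) := by gcongr
    _ ≤ 5 / 2 * J a b d + 12 / R := by
        have : 12 / R = 4 / R + 4 / R + 4 / R := by ring
        linarith
    _ ≤ 16 * (Real.log (d + R) - Real.log d) / R + 12 / R := by linarith
    _ = _ := by ring


/-- For `r₀ = |log ε|^α` with `α > 1`, the estimate `|G − K| ≤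
(C/|log ε|^α)(1 + log|log ε| + χ_{(0,1)}(|x−y|) log(1/|x−y|))`. -/
theorem stmt1 (α : ℝ) (hα : 1 < α) :
    ∃ C > (0:ℝ), ∃ ε₀ ∈ Set.Ioo (0:ℝ) 1, ∀ ε : ℝ, ε ∈ Set.Ioo 0 ε₀ →
      ∀ x y : E2, x ≠ y →
        |x 1| ≤ |Real.log ε| ^ α / 2 → |y 1| ≤ |Real.log ε| ^ α / 2 →
          ‖Gvec (|Real.log ε| ^ α) x y - K (x - y)‖ ≤
            C / |Real.log ε| ^ α * (1 + Real.log |Real.log ε| +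
              (if ‖x - y‖ < 1 then Real.log (1 / ‖x - y‖) else 0)) := by
  refine ⟨28 * α, by linarith, Real.exp (-1), ⟨Real.exp_pos _, by simp⟩, ?_⟩
  rintro ε ⟨hε0, hε1⟩ x y hxy hx hy
  have hlog : Real.log ε < -1 := (Real.log_lt_iff_lt_exp hε0).2 hε1
  have hL : 1 < |Real.log ε| := by rw [abs_of_neg (by linarith)]; linarith
  set L := |Real.log ε| with hLdef
  set R := L ^ α with hRdef
  have hR1 : 1 ≤ R := Real.one_le_rpow hL.le (by linarith)
  have hR : 0 < R := by linarith
  have hd : 0 < ‖x - y‖ := norm_pos_iff.2 (sub_ne_zero.2 hxy)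
  have hlL : 0 ≤ Real.log L := Real.log_nonneg hL.le
  have hlR : Real.log R = α * Real.log L := Real.log_rpow (by linarith) α
  refine (kernel_bound hR hxy hx hy).trans ?_
  have hlog2 : Real.log 2 ≤ 1 := by linarith [Real.log_two_lt_d9]
  set d := ‖x - y‖ with hddef
  have hχ0 : 0 ≤ (if d < 1 then Real.log (1 / d) else 0) := by
    split_ifs with h
    · exact Real.log_nonneg ((one_le_div hd).2 h.le)
    · exact le_rfl
  have key : Real.log (d + R) - Real.log d
      ≤ 1 + α * Real.log L + (if d < 1 then Real.log (1 / d) else 0) := by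
    split_ifs with h
    · have h1 : Real.log (d + R) ≤ Real.log (2 * R) :=
        Real.log_le_log (by positivity) (by linarith)
      rw [Real.log_mul (by norm_num) hR.ne', hlR] at h1
      rw [one_div, Real.log_inv]
      linarith
    · have h1 : Real.log (d + R) ≤ Real.log (2 * R * d) :=
        Real.log_le_log (by positivity) (by nlinarith)
      rw [Real.log_mul (by positivity) hd.ne', Real.log_mul (by norm_num) hR.ne', hlR] at h1
      linarith
  set χ := (if d < 1 then Real.log (1 / d) else 0) with hχ
  rw [div_mul_eq_mul_div]
  gcongr
  nlinarith
end
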